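/- Let ρ̄ be a probability density on 𝕋^d and φ a bounded measurable function on 𝕋^{3d} with M_p := ‖ sup_{z,z'} |φ(·,z,z')| ‖_{L^p(ρ̄ dx)} finite. If 4m > N, then (1/(2m)!) ∫_{𝕋^{dN}} ρ̄_N(X) ( N^{−2} ∑_{i,j,k=1}^N φ(x_i, x_j, x_k) )^{2m} dX ≤ ( 3e^2 sup_{p ≥ 1} M_p / p )^{2m}. -/

import Mathlib

open MeasureTheory

/-- The `d`-dimensional torus `𝕋^d = [0,1]^d`. -/
abbrev Torus (d : ℕ) := Fin d → AddCircle (1 : ℝ)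

/-- `M_p = ‖ sup_{z,z'} |φ(·,z,z')| ‖_{L^p(ρ̄ dx)}`. -/
noncomputable def Mp {d : ℕ} (ρ : Torus d → ℝ) (φ : Torus d → Torus d → Torus d → ℝ)
    (p : ℝ) : ℝ :=
  (∫ x : Torus d, (⨆ z, ⨆ z', |φ x z z'|) ^ p * ρ x) ^ (1 / p)

/-- `sup_{p ≥ 1} M_p / p`. -/
noncomputable def Msup {d : ℕ} (ρ : Torus d → ℝ)
    (φ : Torus d → Torus d → Torus d → ℝ) : ℝ :=
  ⨆ p : {p : ℝ // 1 ≤ p}, Mp ρ φ (p : ℝ) / (p : ℝ)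

lemma aux_compact_nhd {n : ℕ → ℕ} {V : Set (ℕ → ℕ)} (hV : IsOpen V)
    (hK : Set.Icc 0 n ⊆ V) : ∃ k, {s : ℕ → ℕ | ∀ i < k, s i ≤ n i} ⊆ V := by
  by_contra! h
  have h2 : ∀ k, ∃ s : ℕ → ℕ, (∀ i < k, s i ≤ n i) ∧ s ∉ V := by
    intro k
    obtain ⟨s, hs, hsV⟩ := Set.not_subset.1 (h k)
    exact ⟨s, hs, hsV⟩
  choose s hs hsV using h2
  have hc : IsCompact (Set.Icc 0 n) := isCompact_Icc
  obtain ⟨t, ht, g, hg, hlim⟩ := hc.tendsto_subseq (x := fun k i => min (s k i) (n i))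
    (fun k => ⟨fun i => Nat.zero_le _, fun i => min_le_right _ _⟩)
  have hlim2 : Filter.Tendsto (fun j => s (g j)) Filter.atTop (nhds t) := by
    rw [tendsto_pi_nhds] at hlim ⊢
    intro i
    refine (hlim i).congr' ?_
    filter_upwards [Filter.eventually_gt_atTop i] with j hj
    have : i < g j := lt_of_lt_of_le hj (hg.id_le j)
    simp [hs (g j) i this]
  have := hlim2.eventually (hV.mem_nhds (hK ht))
  obtain ⟨j, hj⟩ := this.exists
  exact hsV _ hj

lemma aux_choose {α : Type*} [MeasurableSpace α] (μ : Measure α) (f : (ℕ → ℕ) → α)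
    {c : ENNReal} (hc : c < μ (Set.range f)) :
    ∃ n : ℕ → ℕ, ∀ k, c < μ (f '' {s : ℕ → ℕ | ∀ i < k, s i ≤ n i}) := by
  have step : ∀ (k : ℕ) (B : {B : Set (ℕ → ℕ) // c < μ (f '' B)}),
      ∃ j : ℕ, c < μ (f '' (B.1 ∩ {s | s k ≤ j})) := by
    intro k B
    have hU : f '' B.1 = ⋃ j : ℕ, f '' (B.1 ∩ {s | s k ≤ j}) := by
      rw [← Set.image_iUnion, ← Set.inter_iUnion]
      congr 1
      have : (⋃ j : ℕ, {s : ℕ → ℕ | s k ≤ j}) = Set.univ := by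
        ext s; simp only [Set.mem_iUnion, Set.mem_univ, iff_true, Set.mem_ofPred_eq]; exact ⟨s k, le_refl (s k)⟩
      rw [this, Set.inter_univ]
    have hmono : Monotone fun j : ℕ => f '' (B.1 ∩ {s | s k ≤ j}) := by
      intro a b hab
      apply Set.image_mono
      rintro x ⟨hx, hx2⟩
      exact ⟨hx, le_trans hx2 hab⟩
    have h := B.2
    rw [hU, hmono.measure_iUnion] at h
    exact lt_iSup_iff.1 h
  choose j hj using step
  let B : ℕ → {B : Set (ℕ → ℕ) // c < μ (f '' B)} := fun k =>
    Nat.rec ⟨Set.univ, by rwa [Set.image_univ]⟩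
      (fun k b => ⟨b.1 ∩ {s | s k ≤ j k b}, hj k b⟩) k
  refine ⟨fun k => j k (B k), fun k => ?_⟩
  have : {s : ℕ → ℕ | ∀ i < k, s i ≤ j i (B i)} = (B k).1 := by
    induction k with
    | zero => ext s; simp [B]
    | succ k ih =>
      have e : (B (k+1)).1 = (B k).1 ∩ {s | s k ≤ j k (B k)} := rfl
      rw [e, ← ih]
      ext s
      simp only [Set.mem_ofPred_eq, Set.mem_inter_iff, Nat.forall_lt_succ_right]
  rw [this]
  exact (B k).2

lemma aux_analytic {α : Type*} [TopologicalSpace α] [T2Space α] [MeasurableSpace α]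
    [OpensMeasurableSpace α] (μ : Measure α) [IsFiniteMeasure μ] [μ.OuterRegular]
    {A : Set α} (hA : AnalyticSet A) : NullMeasurableSet A μ := by
  rw [AnalyticSet] at hA
  rcases hA with rfl | ⟨f, hf, rfl⟩
  · exact MeasurableSet.empty.nullMeasurableSet
  have key : ∀ c < μ (Set.range f), ∃ K ⊆ Set.range f, IsCompact K ∧ c ≤ μ K := by
    intro c hc
    obtain ⟨n, hn⟩ := aux_choose μ f hc
    refine ⟨f '' Set.Icc 0 n, Set.image_subset_range _ _, isCompact_Icc.image hf, ?_⟩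
    rw [Set.measure_eq_iInf_isOpen]
    refine le_iInf fun U => le_iInf fun hU => le_iInf fun hUo => ?_
    obtain ⟨k, hk⟩ := aux_compact_nhd (hUo.preimage hf) (Set.image_subset_iff.1 hU)
    exact (hn k).le.trans (measure_mono (Set.image_subset_iff.2 hk))
  by_cases h0 : μ (Set.range f) = 0
  · exact NullMeasurableSet.of_null h0
  obtain ⟨u, -, hu, hlim⟩ := exists_seq_strictMono_tendsto' (pos_iff_ne_zero.2 h0)
  choose K hKA hKc hK using fun i => key (u i) (hu i).2
  have hm : MeasurableSet (⋃ i, K i) := MeasurableSet.iUnion fun i => (hKc i).measurableSet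
  have hge : μ (Set.range f) ≤ μ (⋃ i, K i) :=
    le_of_tendsto' hlim fun i => (hK i).trans (measure_mono (Set.subset_iUnion K i))
  have := ae_eq_of_subset_of_measure_ge (Set.iUnion_subset hKA) hge hm.nullMeasurableSet
    (measure_ne_top _ _)
  exact hm.nullMeasurableSet.congr this

lemma aux_G_aemeas {d : ℕ} (φ : Torus d → Torus d → Torus d → ℝ)
    (hφmeas : Measurable fun p : Torus d × Torus d × Torus d => φ p.1 p.2.1 p.2.2)
    (C : ℝ) (hφbdd : ∀ x z z', |φ x z z'| ≤ C) :
    AEMeasurable (fun x : Torus d => ⨆ z, ⨆ z', |φ x z z'|) := by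
  apply NullMeasurable.aemeasurable
  have hset : ∀ a : ℝ, NullMeasurableSet {x : Torus d | a < ⨆ z, ⨆ z', |φ x z z'|} volume := by
    intro a
    have e : {x : Torus d | a < ⨆ z, ⨆ z', |φ x z z'|} =
        Prod.fst '' {p : Torus d × Torus d × Torus d | a < |φ p.1 p.2.1 p.2.2|} := by
      ext x
      have hb1 : ∀ z, BddAbove (Set.range fun z' => |φ x z z'|) := fun z =>
        ⟨C, by rintro _ ⟨z', rfl⟩; exact hφbdd x z z'⟩
      have hb2 : BddAbove (Set.range fun z => ⨆ z', |φ x z z'|) :=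
        ⟨C, by rintro _ ⟨z, rfl⟩; exact ciSup_le (hφbdd x z)⟩
      simp only [Set.mem_ofPred_eq, Set.mem_image, Prod.exists]
      rw [lt_ciSup_iff hb2]
      simp_rw [lt_ciSup_iff (hb1 _)]
      constructor
      · rintro ⟨z, z', h⟩
        exact ⟨x, z, z', h, rfl⟩
      · rintro ⟨x', z, z', h, rfl⟩
        exact ⟨z, z', h⟩
    rw [e]
    apply aux_analytic
    apply AnalyticSet.image_of_continuous _ continuous_fst
    haveI hB2 : BorelSpace (Torus d × Torus d) := inferInstance
    haveI hS2 : SecondCountableTopology (Torus d × Torus d) := inferInstance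
    haveI hB3 : BorelSpace (Torus d × Torus d × Torus d) := Prod.borelSpace
    apply MeasurableSet.analyticSet
    exact measurableSet_lt measurable_const hφmeas.abs
  have hb := borel_eq_generateFrom_Ioi ℝ
  rw [← BorelSpace.measurable_eq (α := ℝ)] at hb
  have : @Measurable (NullMeasurableSpace (Torus d) volume) ℝ _ _
      (fun x : Torus d => ⨆ z, ⨆ z', |φ x z z'|) := by
    rw [hb]
    apply measurable_generateFrom
    rintro _ ⟨a, rfl⟩
    exact hset a
  intro s hs
  exact this hs

lemma aux_choose_bound {N m : ℕ} (hm : 0 < m) (h4m : N < 4 * m) :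
    ((N + 2 * m - 1).choose (2 * m) : ℝ) ≤ (3 * Real.exp 1) ^ (2 * m) := by
  have h1 : ((N + 2 * m - 1).choose (2 * m) : ℝ) ≤ ((6 * m).choose (2 * m) : ℕ) := by
    exact_mod_cast Nat.choose_le_choose _ (by omega)
  have h2 := Nat.choose_le_pow_div (α := ℝ) (2 * m) (6 * m)
  have h3 := Real.pow_div_factorial_le_exp (x := ((2 * m : ℕ) : ℝ)) (Nat.cast_nonneg _) (2 * m)
  refine h1.trans (h2.trans ?_)
  have e : (((6 * m : ℕ) : ℝ)) = 3 * ((2 * m : ℕ) : ℝ) := by push_cast; ring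
  rw [e, mul_pow, mul_pow, mul_div_assoc, ← Real.exp_nat_mul, mul_one]
  gcongr

lemma aux_card (N n : ℕ) :
    (Finset.piAntidiag (Finset.univ : Finset (Fin N)) n).card = (N + n - 1).choose n := by
  have := Finset.map_sym_eq_piAntidiag (Finset.univ : Finset (Fin N)) n
  rw [← this, Finset.card_map]
  rw [Finset.sym_univ, Finset.card_univ, Sym.card_sym_eq_choose, Fintype.card_fin]

lemma aux_core {E : Type*} [MeasureSpace E] [SigmaFinite (volume : Measure E)] {N n : ℕ}
    (ρ G : E → ℝ) (hint : ∀ a : ℕ, Integrable (fun x => G x ^ a * ρ x))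
    (hG : ∀ x, 0 ≤ G x) (hρ : ∀ x, 0 ≤ ρ x) (S : ℝ)
    (hmom : ∀ a : ℕ, ∫ x, G x ^ a * ρ x ≤ Real.exp 1 ^ a * a.factorial * S ^ a)
    (F : (Fin N → E) → ℝ) (hF0 : ∀ X, 0 ≤ F X)
    (hF : ∀ X, F X ≤ (∑ i, G (X i)) ^ n * ∏ s, ρ (X s)) :
    ∫ X, F X ≤ n.factorial * ((N + n - 1).choose n * (Real.exp 1 * S) ^ n) := by
  have expand : ∀ X : Fin N → E, (∑ i, G (X i)) ^ n * ∏ s, ρ (X s) =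
      ∑ k ∈ Finset.piAntidiag Finset.univ n, (Nat.multinomial Finset.univ k : ℝ) *
        ∏ i, (G (X i) ^ k i * ρ (X i)) := by
    intro X
    rw [Finset.sum_pow_eq_sum_piAntidiag, Finset.sum_mul]
    refine Finset.sum_congr rfl fun k _ => ?_
    rw [Finset.prod_mul_distrib, mul_assoc]
  have hi : ∀ k : Fin N → ℕ, Integrable (fun X : Fin N → E => (Nat.multinomial Finset.univ k : ℝ) *
        ∏ i, (G (X i) ^ k i * ρ (X i))) := fun k =>
    (Integrable.fintype_prod (f := fun i x => G x ^ k i * ρ x) fun i => hint (k i)).const_mul _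
  calc ∫ X, F X ≤ ∫ X : Fin N → E, ∑ k ∈ Finset.piAntidiag Finset.univ n,
        (Nat.multinomial Finset.univ k : ℝ) * ∏ i, (G (X i) ^ k i * ρ (X i)) := by
        apply integral_mono_of_nonneg (Filter.Eventually.of_forall hF0)
        · exact integrable_finsetSum _ fun k _ => hi k
        · exact Filter.Eventually.of_forall fun X => (hF X).trans_eq (expand X)
    _ = ∑ k ∈ Finset.piAntidiag Finset.univ n,
        (Nat.multinomial Finset.univ k : ℝ) * ∏ i, ∫ x, G x ^ k i * ρ x := by
        rw [integral_finsetSum _ fun k _ => hi k]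
        refine Finset.sum_congr rfl fun k _ => ?_
        rw [integral_const_mul]
        congr 1
        exact integral_fintype_prod_volume_eq_prod (fun i x => G x ^ k i * ρ x)
    _ ≤ ∑ k ∈ Finset.piAntidiag (Finset.univ : Finset (Fin N)) n,
        (n.factorial : ℝ) * (Real.exp 1 * S) ^ n := by
        refine Finset.sum_le_sum fun k hk => ?_
        have hk' : ∑ i, k i = n := (Finset.mem_piAntidiag.1 hk).1
        have h1 : ∏ i, ∫ x, G x ^ k i * ρ x ≤
            ∏ i, (Real.exp 1 ^ k i * (k i).factorial * S ^ k i) :=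
          Finset.prod_le_prod (fun i _ => integral_nonneg fun x =>
            mul_nonneg (pow_nonneg (hG x) _) (hρ x)) fun i _ => hmom (k i)
        have h2 : ∏ i, (Real.exp 1 ^ k i * (k i).factorial * S ^ k i) =
            (∏ i, ((k i).factorial : ℝ)) * (Real.exp 1 * S) ^ n := by
          rw [Finset.prod_mul_distrib, Finset.prod_mul_distrib, Finset.prod_pow_eq_pow_sum,
            Finset.prod_pow_eq_pow_sum, hk', mul_pow]
          ring
        have h3 : ((∏ i, ((k i).factorial : ℝ)) * (Nat.multinomial Finset.univ k : ℝ)) =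
            n.factorial := by
          have := Nat.multinomial_spec Finset.univ k
          rw [hk'] at this
          exact_mod_cast this
        calc _ ≤ (Nat.multinomial Finset.univ k : ℝ) *
              ((∏ i, ((k i).factorial : ℝ)) * (Real.exp 1 * S) ^ n) := by
              rw [← h2]; gcongr
          _ = _ := by rw [← h3]; ring
    _ = _ := by
        rw [Finset.sum_const, aux_card, nsmul_eq_mul]; ring

/-- Proposition 3.1 (large-`m` regime): if `4m > N` then
`(1/(2m)!) ∫ ρ̄^{⊗N} (N^{−2} ∑_{i,j,k} φ(x_i,x_j,x_k))^{2m} ≤ (3e² sup_{p≥1} M_p/p)^{2m}`. -/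
theorem stmt15 {d N m : ℕ} (hd : 0 < d) (hN : 0 < N) (hm : 0 < m) (h4m : N < 4 * m)
    (ρ : Torus d → ℝ) (hρmeas : Measurable ρ) (hρ0 : ∀ x, 0 ≤ ρ x)
    (hρ1 : ∫ x : Torus d, ρ x = 1)
    (φ : Torus d → Torus d → Torus d → ℝ)
    (hφmeas : Measurable fun p : Torus d × Torus d × Torus d => φ p.1 p.2.1 p.2.2)
    (C : ℝ) (hφbdd : ∀ x z z', |φ x z z'| ≤ C) :
    ((Nat.factorial (2 * m) : ℝ))⁻¹ *
        ∫ X : Fin N → Torus d,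
          ((1 / (N : ℝ) ^ 2) * ∑ i : Fin N, ∑ j : Fin N, ∑ k : Fin N,
              φ (X i) (X j) (X k)) ^ (2 * m) * ∏ s, ρ (X s)
      ≤ (3 * Real.exp 1 ^ 2 * Msup ρ φ) ^ (2 * m) := by
  have hC0 : 0 ≤ C := (abs_nonneg _).trans (hφbdd 0 0 0)
  set G : Torus d → ℝ := fun x => ⨆ z, ⨆ z', |φ x z z'| with hGdef
  have hGm : AEMeasurable G := aux_G_aemeas φ hφmeas C hφbdd
  have hG0 : ∀ x, 0 ≤ G x := fun x =>
    Real.iSup_nonneg fun z => Real.iSup_nonneg fun z' => abs_nonneg _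
  have hGC : ∀ x, G x ≤ C := fun x => ciSup_le fun z => ciSup_le fun z' => hφbdd x z z'
  have hφG : ∀ x z z', |φ x z z'| ≤ G x := by
    intro x z z'
    have hb1 : BddAbove (Set.range fun z' => |φ x z z'|) :=
      ⟨C, by rintro _ ⟨z', rfl⟩; exact hφbdd x z z'⟩
    have hb2 : BddAbove (Set.range fun z => ⨆ z', |φ x z z'|) :=
      ⟨C, by rintro _ ⟨z, rfl⟩; exact ciSup_le (hφbdd x z)⟩
    exact (le_ciSup hb1 z').trans (le_ciSup hb2 z)
  have hρi : Integrable ρ := by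
    by_contra h
    rw [integral_undef h] at hρ1
    exact zero_ne_one hρ1
  have hint : ∀ a : ℕ, Integrable (fun x => G x ^ a * ρ x) := by
    intro a
    refine hρi.bdd_mul (c := C ^ a) (hGm.pow_const a).aestronglyMeasurable ?_
    refine Filter.Eventually.of_forall fun x => ?_
    rw [Real.norm_of_nonneg (pow_nonneg (hG0 x) _)]
    exact pow_le_pow_left₀ (hG0 x) (hGC x) _
  have hI0 : ∀ p : ℝ, 0 ≤ ∫ x, G x ^ p * ρ x := fun p => integral_nonneg fun x =>
    mul_nonneg (Real.rpow_nonneg (hG0 x) _) (hρ0 x)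
  have hMp : ∀ p : ℝ, Mp ρ φ p = (∫ x, G x ^ p * ρ x) ^ (1 / p) := fun p => rfl
  have hMC : ∀ p : ℝ, 1 ≤ p → Mp ρ φ p ≤ C := by
    intro p hp
    have hle : ∫ x, G x ^ p * ρ x ≤ C ^ p := by
      calc ∫ x, G x ^ p * ρ x ≤ ∫ x, C ^ p * ρ x := by
            apply integral_mono_of_nonneg
            · exact Filter.Eventually.of_forall fun x =>
                mul_nonneg (Real.rpow_nonneg (hG0 x) _) (hρ0 x)
            · exact hρi.const_mul _
            · exact Filter.Eventually.of_forall fun x => mul_le_mul_of_nonneg_right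
                (Real.rpow_le_rpow (hG0 x) (hGC x) (by linarith)) (hρ0 x)
        _ = C ^ p := by rw [integral_const_mul, hρ1, mul_one]
    rw [hMp]
    calc _ ≤ (C ^ p) ^ (1 / p) := Real.rpow_le_rpow (hI0 p) hle (by positivity)
      _ = C := by rw [one_div, Real.rpow_rpow_inv hC0 (by linarith)]
  have hM0 : ∀ p : ℝ, 0 ≤ Mp ρ φ p := fun p => Real.rpow_nonneg (hI0 p) _
  have hbdd : BddAbove (Set.range fun p : {p : ℝ // 1 ≤ p} => Mp ρ φ (p : ℝ) / (p : ℝ)) := by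
    refine ⟨C, ?_⟩
    rintro _ ⟨⟨p, hp⟩, rfl⟩
    exact (div_le_self (hM0 p) hp).trans (hMC p hp)
  have hS0 : 0 ≤ Msup ρ φ := Real.iSup_nonneg fun p =>
    div_nonneg (hM0 _) (by linarith [p.2])
  have hmom : ∀ a : ℕ, ∫ x, G x ^ a * ρ x ≤
      Real.exp 1 ^ a * a.factorial * (Msup ρ φ) ^ a := by
    intro a
    rcases Nat.eq_zero_or_pos a with rfl | ha
    · simp [hρ1]
    have ha1 : (1 : ℝ) ≤ a := by exact_mod_cast ha
    have h1 : Mp ρ φ a / a ≤ Msup ρ φ := le_ciSup hbdd ⟨(a : ℝ), ha1⟩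
    have h2 : Mp ρ φ a ≤ a * Msup ρ φ := by
      rw [div_le_iff₀ (by linarith)] at h1; linarith
    have h3 : ∫ x, G x ^ a * ρ x = Mp ρ φ a ^ a := by
      rw [hMp, one_div, Real.rpow_inv_natCast_pow (hI0 _) ha.ne']
      simp only [Real.rpow_natCast]
    have h4 := Real.pow_div_factorial_le_exp (x := (a : ℝ)) (Nat.cast_nonneg _) a
    rw [div_le_iff₀ (by positivity)] at h4
    rw [h3]
    calc Mp ρ φ a ^ a ≤ (a * Msup ρ φ) ^ a := pow_le_pow_left₀ (hM0 _) h2 _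
      _ = (a : ℝ) ^ a * Msup ρ φ ^ a := mul_pow _ _ _
      _ ≤ _ := by
        rw [← Real.exp_nat_mul, mul_one]
        gcongr
  have hNpos : (0 : ℝ) < N := by exact_mod_cast hN
  have hsum : ∀ X : Fin N → Torus d, |(1 / (N : ℝ) ^ 2) * ∑ i : Fin N, ∑ j : Fin N, ∑ k : Fin N,
              φ (X i) (X j) (X k)| ≤ ∑ i, G (X i) := by
    intro X
    have h1 : |∑ i : Fin N, ∑ j : Fin N, ∑ k : Fin N, φ (X i) (X j) (X k)| ≤
        ∑ i : Fin N, ∑ j : Fin N, ∑ k : Fin N, G (X i) := by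
      refine (Finset.abs_sum_le_sum_abs _ _).trans (Finset.sum_le_sum fun i _ => ?_)
      refine (Finset.abs_sum_le_sum_abs _ _).trans (Finset.sum_le_sum fun j _ => ?_)
      exact (Finset.abs_sum_le_sum_abs _ _).trans (Finset.sum_le_sum fun k _ => hφG _ _ _)
    rw [abs_mul, abs_of_pos (by positivity : 0 < 1 / (N : ℝ) ^ 2)]
    calc _ ≤ 1 / (N : ℝ) ^ 2 * ∑ i : Fin N, ∑ j : Fin N, ∑ k : Fin N, G (X i) := by gcongr
      _ = ∑ i, G (X i) := by
        simp only [Finset.sum_const, Finset.card_univ, Fintype.card_fin, nsmul_eq_mul,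
          ← Finset.mul_sum]
        field_simp
  have hcore := aux_core (N := N) (n := 2 * m) ρ G hint hG0 hρ0 (Msup ρ φ) hmom
    (fun X => ((1 / (N : ℝ) ^ 2) * ∑ i : Fin N, ∑ j : Fin N, ∑ k : Fin N,
              φ (X i) (X j) (X k)) ^ (2 * m) * ∏ s, ρ (X s))
    (fun X => mul_nonneg ((even_two_mul m).pow_nonneg _) (Finset.prod_nonneg fun s _ => hρ0 _))
    (fun X => by
      refine mul_le_mul_of_nonneg_right ?_ (Finset.prod_nonneg fun s _ => hρ0 _)
      rw [← (even_two_mul m).pow_abs]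
      exact pow_le_pow_left₀ (abs_nonneg _) (hsum X) _)
  have hb := aux_choose_bound hm h4m
  rw [inv_mul_le_iff₀ (by positivity)]
  refine hcore.trans ?_
  have e : (3 * Real.exp 1 ^ 2 * Msup ρ φ) ^ (2 * m) =
      (3 * Real.exp 1) ^ (2 * m) * (Real.exp 1 * Msup ρ φ) ^ (2 * m) := by
    rw [← mul_pow]; ring
  rw [e]
  gcongr
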